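/- Let additionally m > 0 and u∞ = −√((γRT∞+1)/m). There exist δ > 0 and c > 0, depending only on γ, R, T∞, m, θ and ε, such that whenever φ_b ∈ (0, δ], one has for every x₁ ≥ 0 and all real numbers φ, ψ₁, ζ: |u∞| q₁(x₁) φ² + q₂(x₁) φψ₁ + (1/|u∞|) q₃(x₁) ψ₁² + |u∞| q₄(x₁) ζ² + q₅(x₁) ζψ₁ ≥ c B(x₁)^{−2} (φ² + ψ₁² + ζ²). -/

import Mathlib

noncomputable def Bfun (β x : ℝ) : ℝ := x + β⁻¹

noncomputable def Sfun (β Γ φb x : ℝ) : ℝ :=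
  (x + β⁻¹) / (x + Γ⁻¹ * (Real.sqrt φb)⁻¹)

noncomputable def q1 (γ R T Γ ε β φb x : ℝ) : ℝ :=
  (ε / 2) * R * T +
    (((1 - R * T) * ε / 2) * (Sfun β Γ φb x) ^ 2
      - (Γ ^ 2 / 2) * ε * (ε - 1) * (ε - 2)
      + (γ * R * T - 1) * (Sfun β Γ φb x) ^ 3) / ((Bfun β x) ^ 2 * Γ ^ 2)

noncomputable def q2 (γ R T Γ ε β φb x : ℝ) : ℝ :=
  -(R * T * ε) +
    (2 * ε * R * T * (Sfun β Γ φb x) ^ 2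
      + 2 * (1 - γ * R * T) * (Sfun β Γ φb x) ^ 3) / ((Bfun β x) ^ 2 * Γ ^ 2)

noncomputable def q3 (γ R T Γ ε β φb x : ℝ) : ℝ :=
  (ε / 2) * γ * R * T +
    (((1 - R * T) * ε / 2) * (Sfun β Γ φb x) ^ 2
      + (3 * γ * R * T + 3) * (Sfun β Γ φb x) ^ 3) / ((Bfun β x) ^ 2 * Γ ^ 2)

noncomputable def q4 (γ R T Γ ε β φb x : ℝ) : ℝ :=
  ε * R / (2 * (γ - 1) * T) +
    (-(ε * R / (2 * (γ - 1) * T)) * (Sfun β Γ φb x) ^ 2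
      + (γ * R / ((γ - 1) * T)) * (Sfun β Γ φb x) ^ 3) / ((Bfun β x) ^ 2 * Γ ^ 2)

noncomputable def q5 (γ R T Γ ε β φb x : ℝ) : ℝ :=
  -(ε * R) + 2 * ε * R * (Sfun β Γ φb x) ^ 2 / ((Bfun β x) ^ 2 * Γ ^ 2)

/-!
As `φ_b → 0` the weight `t = B⁻² Γ⁻²` tends to `0`, and the form is a limit form plus `t` times a
correction depending only on `S`, which ranges over the compact interval `[1, θ⁻¹]`. The limit form
is a sum of two squares, hence nonnegative with a one-dimensional kernel, so what matters is that
the correction is positive on that kernel. There it is a multiple of an increasing polynomial in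
`S`, and the cubic equation for `λ₀` makes this polynomial positive at `S = 1`. The conclusion is
then a compactness argument on the unit sphere: if `f ≥ 0` and `g > 0` wherever `f = 0`, then
`f + δ g ≥ η > 0` for some `δ`, and for `t ≤ δ` the convex combination
`f + t g = (1 - t / δ) f + (t / δ) (f + δ g)` is at least `t η / δ`.
-/

section Perturbation

variable {X : Type*} [TopologicalSpace X] {s : Set X} {f g : X → ℝ}

lemma exists_pos_forall_add_mul_pos (hs : IsCompact s) (hf : ContinuousOn f s)
    (hg : ContinuousOn g s) (hf₀ : ∀ x ∈ s, 0 ≤ f x) (hfg : ∀ x ∈ s, f x = 0 → 0 < g x) :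
    ∃ δ > 0, ∀ x ∈ s, 0 < f x + δ * g x := by
  have max_pos : ∀ x ∈ s, 0 < max (f x) (g x) := fun x hx ↦
    lt_max_iff.2 <| (hf₀ x hx).lt_or_eq.imp_right fun h ↦ hfg x hx h.symm
  obtain ⟨η, hη, hη_le⟩ := hs.exists_forall_le' (hf.sup hg) max_pos
  obtain ⟨M, hM⟩ := hs.exists_bound_of_continuousOn hg
  have hδ : 0 < η / (|M| + 1) := by positivity
  refine ⟨_, hδ, fun x hx ↦ ?_⟩
  rcases le_max_iff.1 (hη_le x hx) with hfx | hgx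
  · have g_lower : -(|M| + 1) < g x := by
      linarith [(abs_le.1 ((hM x hx).trans (le_abs_self M))).1]
    have := mul_lt_mul_of_pos_left g_lower hδ
    have : η / (|M| + 1) * -(|M| + 1) = -η := by field_simp
    linarith
  · linarith [hf₀ x hx, mul_pos hδ (hη.trans_le hgx)]

lemma exists_pos_forall_mul_le_add_mul (hs : IsCompact s) (hf : ContinuousOn f s)
    (hg : ContinuousOn g s) (hf₀ : ∀ x ∈ s, 0 ≤ f x) (hfg : ∀ x ∈ s, f x = 0 → 0 < g x) :
    ∃ δ > 0, ∃ c > 0, ∀ t, 0 ≤ t → t ≤ δ → ∀ x ∈ s, c * t ≤ f x + t * g x := by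
  obtain ⟨δ, hδ, hpos⟩ := exists_pos_forall_add_mul_pos hs hf hg hf₀ hfg
  obtain ⟨η, hη, hη_le⟩ := hs.exists_forall_le' (hf.add (hg.const_mul δ)) hpos
  refine ⟨δ, hδ, η / δ, by positivity, fun t ht htδ x hx ↦ ?_⟩
  have htδ' : 0 ≤ 1 - t / δ := sub_nonneg.2 ((div_le_one hδ).2 htδ)
  calc η / δ * t = t / δ * η := by ring
    _ ≤ t / δ * (f x + δ * g x) := by gcongr; exact hη_le x hx
    _ ≤ (1 - t / δ) * f x + t / δ * (f x + δ * g x) :=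
      le_add_of_nonneg_left (mul_nonneg htδ' (hf₀ x hx))
    _ = f x + t * g x := by field_simp; ring

variable {E : Type*} [NormedAddCommGroup E] [NormedSpace ℝ E] [ProperSpace E]

lemma exists_pos_forall_mul_norm_pow_le_add_mul {n : ℕ} (hn : n ≠ 0) {K : Set X} {F : E → ℝ}
    {G : X → E → ℝ} (hK : IsCompact K) (hF : Continuous F)
    (hG : Continuous fun p : X × E ↦ G p.1 p.2)
    (hF_smul : ∀ r : ℝ, 0 ≤ r → ∀ v, F (r • v) = r ^ n * F v)
    (hG_smul : ∀ a, ∀ r : ℝ, 0 ≤ r → ∀ v, G a (r • v) = r ^ n * G a v)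
    (hF₀ : ∀ v, 0 ≤ F v) (hFG : ∀ a ∈ K, ∀ v ≠ 0, F v = 0 → 0 < G a v) :
    ∃ δ > 0, ∃ c > 0, ∀ t, 0 ≤ t → t ≤ δ → ∀ a ∈ K, ∀ v, c * t * ‖v‖ ^ n ≤ F v + t * G a v := by
  obtain ⟨δ, hδ, c, hc, H⟩ := exists_pos_forall_mul_le_add_mul
    (hK.prod (isCompact_sphere (0 : E) 1)) (hF.comp continuous_snd).continuousOn hG.continuousOn
    (fun p _ ↦ hF₀ p.2)
    fun p hp ↦ hFG p.1 hp.1 p.2 (ne_zero_of_mem_unit_sphere ⟨p.2, hp.2⟩)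
  refine ⟨δ, hδ, c, hc, fun t ht htδ a ha v ↦ ?_⟩
  rcases eq_or_ne v 0 with rfl | hv
  · have F_zero : F 0 = 0 := by simpa [hn] using hF_smul 0 le_rfl 0
    have G_zero : G a 0 = 0 := by simpa [hn] using hG_smul a 0 le_rfl 0
    simp [hn, F_zero, G_zero]
  · obtain ⟨u, hu, hvu⟩ : ∃ u ∈ Metric.sphere (0 : E) 1, v = ‖v‖ • u :=
      ⟨‖v‖⁻¹ • v, by simp [norm_smul, hv], by simp [hv]⟩
    calc c * t * ‖v‖ ^ n = ‖v‖ ^ n * (c * t) := by ring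
      _ ≤ ‖v‖ ^ n * (F u + t * G a u) := by gcongr; exact H t ht htδ (a, u) ⟨ha, hu⟩
      _ = F (‖v‖ • u) + t * G a (‖v‖ • u) := by
        rw [hF_smul _ (norm_nonneg v), hG_smul _ _ (norm_nonneg v)]; ring
      _ = F v + t * G a v := by rw [← hvu]

end Perturbation

section QuadraticForms

/-- The form in `w = (φ, ψ₁, ζ)` with the coefficient pattern of the theorem; `v` stands for
`|u∞|`. -/
noncomputable def energyForm (v a₁ a₂ a₃ a₄ a₅ : ℝ) (w : EuclideanSpace ℝ (Fin 3)) : ℝ :=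
  v * a₁ * w 0 ^ 2 + a₂ * w 0 * w 1 + 1 / v * a₃ * w 1 ^ 2 + v * a₄ * w 2 ^ 2 + a₅ * w 2 * w 1

/-- The energy form whose coefficients are the parts of `q₁, …, q₅` without the factor
`B⁻² Γ⁻²`. -/
noncomputable def limitForm (γ R T ε v : ℝ) : EuclideanSpace ℝ (Fin 3) → ℝ :=
  energyForm v (ε / 2 * R * T) (-(R * T * ε)) (ε / 2 * γ * R * T) (ε * R / (2 * (γ - 1) * T))
    (-(ε * R))

/-- The energy form whose coefficients are the factors of `B⁻² Γ⁻²` in `q₁, …, q₅`, as functions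
of `S`. -/
noncomputable def correctionForm (γ R T Γ ε v S : ℝ) : EuclideanSpace ℝ (Fin 3) → ℝ :=
  energyForm v
    ((1 - R * T) * ε / 2 * S ^ 2 - Γ ^ 2 / 2 * ε * (ε - 1) * (ε - 2) + (γ * R * T - 1) * S ^ 3)
    (2 * ε * R * T * S ^ 2 + 2 * (1 - γ * R * T) * S ^ 3)
    ((1 - R * T) * ε / 2 * S ^ 2 + (3 * γ * R * T + 3) * S ^ 3)
    (-(ε * R / (2 * (γ - 1) * T)) * S ^ 2 + γ * R / ((γ - 1) * T) * S ^ 3)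
    (2 * ε * R * S ^ 2)

/-- The value of `|u∞|` times the correction form at the vector `(|u∞|⁻¹, 1, (γ - 1) T |u∞|⁻¹)`
spanning the kernel of the limit form. -/
noncomputable def kernelCorrection (γ R T Γ ε S : ℝ) : ℝ :=
  ε * (1 + R * T * (3 * γ - 1) / 2) * S ^ 2 + (4 + R * T * (γ ^ 2 + γ)) * S ^ 3
    - Γ ^ 2 / 2 * ε * (ε - 1) * (ε - 2)

variable {γ R T Γ ε v S : ℝ} {w : EuclideanSpace ℝ (Fin 3)}

lemma energyForm_smul (v a₁ a₂ a₃ a₄ a₅ r : ℝ) (w : EuclideanSpace ℝ (Fin 3)) :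
    energyForm v a₁ a₂ a₃ a₄ a₅ (r • w) = r ^ 2 * energyForm v a₁ a₂ a₃ a₄ a₅ w := by
  simp only [energyForm, PiLp.smul_apply, smul_eq_mul]
  ring

lemma energyForm_q_eq (γ R T Γ ε β φb v x : ℝ) (w : EuclideanSpace ℝ (Fin 3)) :
    energyForm v (q1 γ R T Γ ε β φb x) (q2 γ R T Γ ε β φb x) (q3 γ R T Γ ε β φb x)
        (q4 γ R T Γ ε β φb x) (q5 γ R T Γ ε β φb x) w =
      limitForm γ R T ε v w
        + 1 / (Bfun β x ^ 2 * Γ ^ 2) * correctionForm γ R T Γ ε v (Sfun β Γ φb x) w := by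
  simp only [q1, q2, q3, q4, q5, limitForm, correctionForm, energyForm]
  ring

lemma continuous_correctionForm (γ R T Γ ε v : ℝ) :
    Continuous fun p : ℝ × EuclideanSpace ℝ (Fin 3) ↦ correctionForm γ R T Γ ε v p.1 p.2 := by
  unfold correctionForm energyForm
  fun_prop

lemma continuous_limitForm (γ R T ε v : ℝ) : Continuous (limitForm γ R T ε v) := by
  unfold limitForm energyForm
  fun_prop

lemma limitForm_eq_sq_add_sq (hγ : γ ≠ 1) (hT : T ≠ 0) (hv : v ≠ 0) :
    limitForm γ R T ε v w = ε * R * T / (2 * v) * (v * w 0 - w 1) ^ 2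
      + ε * R / (2 * (γ - 1) * T * v) * (v * w 2 - (γ - 1) * T * w 1) ^ 2 := by
  have : γ - 1 ≠ 0 := sub_ne_zero.2 hγ
  simp only [limitForm, energyForm]
  field_simp
  ring

lemma limitForm_nonneg (hγ : 1 < γ) (hR : 0 ≤ R) (hT : 0 < T) (hε : 0 ≤ ε) (hv : 0 < v)
    (w : EuclideanSpace ℝ (Fin 3)) : 0 ≤ limitForm γ R T ε v w := by
  have : 0 < γ - 1 := sub_pos.2 hγ
  rw [limitForm_eq_sq_add_sq hγ.ne' hT.ne' hv.ne']
  positivity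

lemma limitForm_eq_zero_iff (hγ : 1 < γ) (hR : 0 < R) (hT : 0 < T) (hε : 0 < ε) (hv : 0 < v) :
    limitForm γ R T ε v w = 0 ↔ v * w 0 = w 1 ∧ v * w 2 = (γ - 1) * T * w 1 := by
  have : 0 < γ - 1 := sub_pos.2 hγ
  rw [limitForm_eq_sq_add_sq hγ.ne' hT.ne' hv.ne',
    add_eq_zero_iff_of_nonneg (by positivity) (by positivity),
    mul_eq_zero_iff_left (by positivity), mul_eq_zero_iff_left (by positivity),
    sq_eq_zero_iff, sq_eq_zero_iff, sub_eq_zero, sub_eq_zero]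

lemma correctionForm_of_mem_kernel (hγ : γ ≠ 1) (hv : v ≠ 0) (h₀ : v * w 0 = w 1)
    (h₂ : v * w 2 = (γ - 1) * T * w 1) :
    correctionForm γ R T Γ ε v S w = kernelCorrection γ R T Γ ε S / v * w 1 ^ 2 := by
  have : γ - 1 ≠ 0 := sub_ne_zero.2 hγ
  have w₀_eq : w 0 = w 1 / v := by field_simp; linarith
  have w₂_eq : w 2 = (γ - 1) * T * w 1 / v := by field_simp; linarith
  simp only [correctionForm, energyForm, kernelCorrection, w₀_eq, w₂_eq]
  field_simp
  ring

lemma correctionForm_pos_of_limitForm_eq_zero (hγ : 1 < γ) (hR : 0 < R) (hT : 0 < T) (hε : 0 < ε)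
    (hv : 0 < v) (hS : 0 < kernelCorrection γ R T Γ ε S) (hw : w ≠ 0)
    (hw₀ : limitForm γ R T ε v w = 0) : 0 < correctionForm γ R T Γ ε v S w := by
  obtain ⟨h₀, h₂⟩ := (limitForm_eq_zero_iff hγ hR hT hε hv).1 hw₀
  have w₁_ne : w 1 ≠ 0 := by
    contrapose! hw
    ext i
    fin_cases i <;> simp_all [hv.ne']
  rw [correctionForm_of_mem_kernel hγ.ne' hv.ne' h₀ h₂]
  positivity

lemma kernelCorrection_mono (hγ : 1 ≤ γ) (hR : 0 ≤ R) (hT : 0 ≤ T) (hε : 0 ≤ ε) :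
    MonotoneOn (kernelCorrection γ R T Γ ε) (Set.Ici 0) := by
  intro S hS S' _ hSS'
  have : 0 ≤ 3 * γ - 1 := by linarith
  have : 0 ≤ S := hS
  unfold kernelCorrection
  gcongr

lemma exists_coercive_limitForm_add_mul_correctionForm (hγ : 1 < γ) (hR : 0 < R) (hT : 0 < T)
    (hε : 0 < ε) (hv : 0 < v) (hpos : 0 < kernelCorrection γ R T Γ ε 1) (L : ℝ) :
    ∃ δ > 0, ∃ c > 0, ∀ t, 0 ≤ t → t ≤ δ → ∀ S ∈ Set.Icc 1 L, ∀ w,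
      c * t * ‖w‖ ^ 2 ≤ limitForm γ R T ε v w + t * correctionForm γ R T Γ ε v S w := by
  refine exists_pos_forall_mul_norm_pow_le_add_mul two_ne_zero isCompact_Icc
    (continuous_limitForm γ R T ε v) (continuous_correctionForm γ R T Γ ε v)
    (fun r _ ↦ energyForm_smul _ _ _ _ _ _ r) (fun S r _ ↦ energyForm_smul _ _ _ _ _ _ r)
    (limitForm_nonneg hγ hR.le hT hε.le hv) fun S hS w ↦ ?_
  have one_le_S : 1 ≤ S := hS.1
  exact correctionForm_pos_of_limitForm_eq_zero hγ hR hT hε hv <| hpos.trans_le <|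
    kernelCorrection_mono hγ.le hR.le hT.le hε.le (Set.mem_Ici.2 zero_le_one)
      (Set.mem_Ici.2 (zero_le_one.trans one_le_S)) one_le_S

end QuadraticForms

section Threshold

lemma neg_one_le_mul_mul_add_sub_three {x y : ℝ} (hx : 0 ≤ x) (hy : 0 ≤ y) :
    -1 ≤ x * y * (x + y - 3) := by
  rcases le_total 3 (x + y) with h | h
  · have : 0 ≤ x * y * (x + y - 3) := mul_nonneg (mul_nonneg hx hy) (sub_nonneg.2 h)
    linarith
  · calc -1 ≤ (x + y) ^ 2 / 4 * (x + y - 3) := by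
          linarith [mul_nonneg (add_nonneg (add_nonneg hx hy) zero_le_one) (sq_nonneg (x + y - 2))]
      _ ≤ x * y * (x + y - 3) :=
          mul_le_mul_of_nonpos_right (by linarith [sq_nonneg (x - y)]) (sub_nonpos.2 h)

lemma cubic_le_affine_of_le_root {a b l x : ℝ} (hb : 1 ≤ b) (hx : 0 < x) (hxl : x ≤ l)
    (hl : l * (l - 1) * (l - 2) = a * l + b) : x * (x - 1) * (x - 2) ≤ a * x + b := by
  have hl₀ : 0 < l := hx.trans_le hxl
  have cofactor_nonneg : 0 ≤ x * l * (x + l - 3) + b := by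
    linarith [neg_one_le_mul_mul_add_sub_three hx.le hl₀.le]
  have factorization : l * (a * x + b - x * (x - 1) * (x - 2)) =
      (l - x) * (x * l * (x + l - 3) + b) := by
    linear_combination -x * hl
  have := factorization.symm ▸ mul_nonneg (sub_nonneg.2 hxl) cofactor_nonneg
  exact sub_nonneg.1 (nonneg_of_mul_nonneg_right this hl₀)

lemma kernelCorrection_one_pos {γ R T Γ l ε : ℝ} (hγ : 1 ≤ γ) (hR : 0 ≤ R) (hT : 0 ≤ T)
    (hΓ : Γ = Real.sqrt (((γ ^ 2 + γ) * R * T + 2) / 12)) (hε : 0 < ε) (hεl : ε ≤ l)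
    (hl : l * (l - 1) * (l - 2) - 12 * (2 * l / (1 + γ) + 2) = 0) :
    0 < kernelCorrection γ R T Γ ε 1 := by
  have : 0 < 1 + γ := by linarith
  have hΓsq : Γ ^ 2 = ((γ ^ 2 + γ) * R * T + 2) / 12 := by rw [hΓ, Real.sq_sqrt (by positivity)]
  have cubic_le : ε * (ε - 1) * (ε - 2) ≤ 24 / (1 + γ) * ε + 24 :=
    cubic_le_affine_of_le_root (by norm_num) hε hεl (by linear_combination hl)
  have : 0 ≤ ε * (γ - 1) * (1 / (1 + γ) + R * T / 2) := by
    have : 0 ≤ γ - 1 := sub_nonneg.2 hγ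
    positivity
  calc 0 < ε * (γ - 1) * (1 / (1 + γ) + R * T / 2) + 2 := by positivity
    _ = ε * (1 + R * T * (3 * γ - 1) / 2) + (4 + R * T * (γ ^ 2 + γ))
        - Γ ^ 2 / 2 * (24 / (1 + γ) * ε + 24) := by rw [hΓsq]; field_simp; ring
    _ ≤ ε * (1 + R * T * (3 * γ - 1) / 2) + (4 + R * T * (γ ^ 2 + γ))
        - Γ ^ 2 / 2 * (ε * (ε - 1) * (ε - 2)) := by gcongr
    _ = kernelCorrection γ R T Γ ε 1 := by unfold kernelCorrection; ring

end Threshold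

section Weights

variable {β Γ φb θ x : ℝ}

lemma one_le_Sfun (hΓ : 0 < Γ) (hφb : 0 < φb) (hβ : 0 < β) (h : β / (Γ * Real.sqrt φb) ≤ 1)
    (hx : 0 ≤ x) : 1 ≤ Sfun β Γ φb x := by
  rw [div_le_one (by positivity)] at h
  rw [Sfun, ← mul_inv, one_le_div (by positivity)]
  gcongr

lemma Sfun_le_inv (hΓ : 0 < Γ) (hφb : 0 < φb) (hθ : 0 < θ) (hθ₁ : θ ≤ 1)
    (h : θ ≤ β / (Γ * Real.sqrt φb)) (hx : 0 ≤ x) : Sfun β Γ φb x ≤ θ⁻¹ := by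
  rw [le_div_iff₀ (by positivity)] at h
  rw [Sfun, ← mul_inv, div_le_iff₀ (by positivity), mul_add, ← mul_inv]
  gcongr
  exact le_mul_of_one_le_left hx ((one_le_inv₀ hθ).2 hθ₁)

lemma one_div_sq_Bfun_mul_sq_le (hΓ : 0 < Γ) (hφb : 0 < φb) (hβ : 0 < β)
    (h : β / (Γ * Real.sqrt φb) ≤ 1) (hx : 0 ≤ x) : 1 / (Bfun β x ^ 2 * Γ ^ 2) ≤ φb := by
  rw [div_le_one (by positivity)] at h
  have inv_le_B : (Γ * Real.sqrt φb)⁻¹ ≤ Bfun β x :=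
    (inv_anti₀ hβ h).trans (le_add_of_nonneg_left hx)
  calc 1 / (Bfun β x ^ 2 * Γ ^ 2) ≤ 1 / ((Γ * Real.sqrt φb)⁻¹ ^ 2 * Γ ^ 2) := by gcongr
    _ = Real.sqrt φb ^ 2 := by field_simp
    _ = φb := Real.sq_sqrt hφb.le

end Weights

theorem degenerate_quadratic_form_coercive_general
    (γ R T Γ ε θ m uinf : ℝ)
    (hγ : 1 < γ) (hR : 0 < R) (hT : 0 < T) (hm : 0 < m)
    (hΓ : Γ = Real.sqrt (((γ ^ 2 + γ) * R * T + 2) / 12))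
    (hε : 0 < ε) (hpos : 0 < kernelCorrection γ R T Γ ε 1)
    (hθ : 0 < θ)
    (huinf : uinf = -Real.sqrt ((γ * R * T + 1) / m)) :
    ∃ δ > 0, ∃ c > 0, ∀ φb β : ℝ, 0 < φb → φb ≤ δ → 0 < β →
      θ ≤ β / (Γ * Real.sqrt φb) → β / (Γ * Real.sqrt φb) ≤ 1 →
      ∀ x : ℝ, 0 ≤ x → ∀ φ ψ₁ ζ : ℝ,
        c / (Bfun β x) ^ 2 * (φ ^ 2 + ψ₁ ^ 2 + ζ ^ 2) ≤
          (-uinf) * q1 γ R T Γ ε β φb x * φ ^ 2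
            + q2 γ R T Γ ε β φb x * φ * ψ₁
            + (1 / (-uinf)) * q3 γ R T Γ ε β φb x * ψ₁ ^ 2
            + (-uinf) * q4 γ R T Γ ε β φb x * ζ ^ 2
            + q5 γ R T Γ ε β φb x * ζ * ψ₁ := by
  have hΓ₀ : 0 < Γ := by rw [hΓ]; positivity
  have hv : 0 < -uinf := by rw [huinf, neg_neg]; positivity
  obtain ⟨δ, hδ, c, hc, coercive⟩ :=
    exists_coercive_limitForm_add_mul_correctionForm hγ hR hT hε hv hpos θ⁻¹
  refine ⟨δ, hδ, c / Γ ^ 2, by positivity, fun φb β hφb hφbδ hβ hθβ hβ₁ x hx φ ψ₁ ζ ↦ ?_⟩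
  have S_mem : Sfun β Γ φb x ∈ Set.Icc 1 θ⁻¹ :=
    ⟨one_le_Sfun hΓ₀ hφb hβ hβ₁ hx, Sfun_le_inv hΓ₀ hφb hθ (hθβ.trans hβ₁) hθβ hx⟩
  have weight_le : 1 / (Bfun β x ^ 2 * Γ ^ 2) ≤ δ :=
    (one_div_sq_Bfun_mul_sq_le hΓ₀ hφb hβ hβ₁ hx).trans hφbδ
  have norm_sq : ‖!₂[φ, ψ₁, ζ]‖ ^ 2 = φ ^ 2 + ψ₁ ^ 2 + ζ ^ 2 := by
    simp [EuclideanSpace.real_norm_sq_eq, Fin.sum_univ_three]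
  calc c / Γ ^ 2 / Bfun β x ^ 2 * (φ ^ 2 + ψ₁ ^ 2 + ζ ^ 2)
      = c * (1 / (Bfun β x ^ 2 * Γ ^ 2)) * ‖!₂[φ, ψ₁, ζ]‖ ^ 2 := by
        rw [norm_sq]; ring
    _ ≤ _ := coercive _ (by positivity) weight_le _ S_mem !₂[φ, ψ₁, ζ]
    _ = _ := (energyForm_q_eq γ R T Γ ε β φb (-uinf) x _).symm

/-- Positive definiteness with margin `B(x₁)^{−2}` (paper eq. (47)) of the
degenerate-case quadratic form `Q` in `(φ, ψ₁, ζ)`, where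
`u∞ = −√((γRT∞+1)/m)` and `|u∞| = −u∞`. -/
theorem degenerate_quadratic_form_coercive
    (γ R T Γ l₀ ε θ m uinf : ℝ)
    (hγ : 1 < γ) (hR : 0 < R) (hT : 0 < T) (hm : 0 < m)
    (hΓ : Γ = Real.sqrt (((γ ^ 2 + γ) * R * T + 2) / 12))
    (hl₀ : 4 < l₀)
    (hl₀root : l₀ * (l₀ - 1) * (l₀ - 2) - 12 * (2 * l₀ / (1 + γ) + 2) = 0)
    (hε4 : 4 ≤ ε) (hεl : ε < l₀)
    (hθ : 0 < θ) (hθ1 : θ ≤ 1)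
    (huinf : uinf = -Real.sqrt ((γ * R * T + 1) / m)) :
    ∃ δ > 0, ∃ c > 0, ∀ φb β : ℝ, 0 < φb → φb ≤ δ → 0 < β →
      θ ≤ β / (Γ * Real.sqrt φb) → β / (Γ * Real.sqrt φb) ≤ 1 →
      ∀ x : ℝ, 0 ≤ x → ∀ φ ψ₁ ζ : ℝ,
        c / (Bfun β x) ^ 2 * (φ ^ 2 + ψ₁ ^ 2 + ζ ^ 2) ≤
          (-uinf) * q1 γ R T Γ ε β φb x * φ ^ 2
            + q2 γ R T Γ ε β φb x * φ * ψ₁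
            + (1 / (-uinf)) * q3 γ R T Γ ε β φb x * ψ₁ ^ 2
            + (-uinf) * q4 γ R T Γ ε β φb x * ζ ^ 2
            + q5 γ R T Γ ε β φb x * ζ * ψ₁ :=
  degenerate_quadratic_form_coercive_general γ R T Γ ε θ m uinf hγ hR hT hm hΓ (by linarith)
    (kernelCorrection_one_pos hγ.le hR.le hT.le hΓ (by linarith) hεl.le hl₀root) hθ huinf
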